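/- For all constants c, d > 0 and every constant ε > 0, there exists a constant K such that the following holds: every B_2-circuit with n inputs (n ≥ 4), size at most c·n, and depth at most d·log₂ n computing a Boolean function f : {0,1}^n → {0,1} can be converted to a nondeterministic formula with n actual inputs, at most K·n / log₂ log₂ n guess inputs, and size at most K·n^{1+ε}, computing f. -/

import Mathlib

/-- A Boolean circuit with input index type `ι`. It is given as a straight-line
program: each gate has fan-in 2, and each of its two incoming wires comes from
an input node (a variable in `ι` or a Boolean constant) or from an earlier gate.
The output is a designated node (an input node or a gate). -/
structure Circuit (ι : Type) : Type where
  size : ℕ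
  gate : Fin size → Bool → Bool → Bool
  in1 : (g : Fin size) → (ι ⊕ Bool) ⊕ Fin g.val
  in2 : (g : Fin size) → (ι ⊕ Bool) ⊕ Fin g.val
  out : (ι ⊕ Bool) ⊕ Fin size

namespace Circuit

variable {ι : Type}

/-- The value carried by the output of gate `g` on input assignment `x`. -/
def nodeVal (C : Circuit ι) (x : ι → Bool) : (g : Fin C.size) → Bool
  | g =>
    C.gate g
      (match C.in1 g with
       | .inl (.inl i) => x i
       | .inl (.inr b) => b
       | .inr h => C.nodeVal x ⟨h.val, h.isLt.trans g.isLt⟩)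
      (match C.in2 g with
       | .inl (.inl i) => x i
       | .inl (.inr b) => b
       | .inr h => C.nodeVal x ⟨h.val, h.isLt.trans g.isLt⟩)
  termination_by g => g.val
  decreasing_by all_goals exact h.isLt

/-- The output value of the circuit on input assignment `x`. -/
def eval (C : Circuit ι) (x : ι → Bool) : Bool :=
  match C.out with
  | .inl (.inl i) => x i
  | .inl (.inr b) => b
  | .inr g => C.nodeVal x g

end Circuit

/-- A two-input Boolean function is in `U₂` iff it is neither XOR nor XNOR. -/
def IsU2 (f : Bool → Bool → Bool) : Prop :=
  f ≠ xor ∧ f ≠ fun a b => !(xor a b)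

/-- A `U₂`-circuit: every gate is labeled by a function in `U₂`. -/
def Circuit.IsU2Circuit {ι : Type} (C : Circuit ι) : Prop :=
  ∀ g, IsU2 (C.gate g)

/-- A deterministic circuit computes `f` if it outputs `f x` on every input `x`. -/
def Circuit.Computes {n : ℕ} (C : Circuit (Fin n)) (f : (Fin n → Bool) → Bool) : Prop :=
  ∀ x, C.eval x = f x

/-- A nondeterministic circuit (with `n` actual inputs and `m` guess inputs)
computes `f` if for every actual input `x`, `f x = 1` iff some setting of the
guess inputs makes the circuit output `1`. -/
def Circuit.ComputesND {n m : ℕ} (C : Circuit (Fin n ⊕ Fin m))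
    (f : (Fin n → Bool) → Bool) : Prop :=
  ∀ x, f x = true ↔ ∃ y : Fin m → Bool, C.eval (Sum.elim x y) = true

/-- `sizeDC f`: the size of the smallest deterministic `U₂`-circuit computing `f`. -/
noncomputable def sizeDC {n : ℕ} (f : (Fin n → Bool) → Bool) : ℕ :=
  sInf {s | ∃ C : Circuit (Fin n), C.IsU2Circuit ∧ C.Computes f ∧ C.size = s}

/-- `sizeNDC f`: the size of the smallest nondeterministic `U₂`-circuit computing `f`. -/
noncomputable def sizeNDC {n : ℕ} (f : (Fin n → Bool) → Bool) : ℕ :=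
  sInf {s | ∃ m : ℕ, ∃ C : Circuit (Fin n ⊕ Fin m),
    C.IsU2Circuit ∧ C.ComputesND f ∧ C.size = s}

/-- `Parity_n`. -/
def parity (n : ℕ) (x : Fin n → Bool) : Bool :=
  decide ((∑ i, (x i).toNat) % 2 = 1)

namespace Circuit

/-- The depth of (the output wire of) gate `g`: `1` plus the maximum depth of
its two incoming wires, where wires from input nodes have depth `0`. -/
def nodeDepth {ι : Type} (C : Circuit ι) : (g : Fin C.size) → ℕ
  | g =>
    1 + max
      (match C.in1 g with
       | .inl _ => 0
       | .inr h => C.nodeDepth ⟨h.val, h.isLt.trans g.isLt⟩)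
      (match C.in2 g with
       | .inl _ => 0
       | .inr h => C.nodeDepth ⟨h.val, h.isLt.trans g.isLt⟩)
  termination_by g => g.val
  decreasing_by all_goals exact h.isLt

/-- The depth of a circuit: the length of the longest path from an input to
the output. -/
def depth {ι : Type} (C : Circuit ι) : ℕ :=
  match C.out with
  | .inl _ => 0
  | .inr g => C.nodeDepth g

end Circuit

/-- A Boolean formula over input index type `ι`: a circuit in which every gate
has fan-out `1`, i.e., a tree whose leaves are variables or constants and whose
internal nodes are fan-in-2 gates. -/
inductive Formula (ι : Type) : Type where
  | var : ι → Formula ι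
  | const : Bool → Formula ι
  | gate : (Bool → Bool → Bool) → Formula ι → Formula ι → Formula ι

/-- The size of a formula: its number of gates. -/
def Formula.size {ι : Type} : Formula ι → ℕ
  | .var _ => 0
  | .const _ => 0
  | .gate _ p q => p.size + q.size + 1

/-- Evaluation of a formula. -/
def Formula.eval {ι : Type} (x : ι → Bool) : Formula ι → Bool
  | .var i => x i
  | .const b => b
  | .gate f p q => f (p.eval x) (q.eval x)

/-!
Label every gate by its depth, a number below `2 ^ (r + t)`, and classify the wires by the most
significant bit in which the labels of their two ends differ. Among the roughly `(r + t) / r`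
disjoint blocks of `r` consecutive bit positions, one, `[a, a + r)`, receives few wires: guess the
values of the gates from which these wires start. Labels strictly increase along wires, and along
the remaining wires they still do so after the bits `[a, a + r)` are erased from all labels. Hence
a path of remaining wires visits at most `2 ^ t` gates, and unrolling the circuit down to the
guessed gates gives formulas of size below `2 ^ 2 ^ t`. The final formula checks every guess against
its gate and outputs the value of the circuit. With `r` constant and `2 ^ t` about `ε log₂ n` this
gives `O(n / log log n)` guesses and size `O(n ^ (1 + ε))`.
-/

section BitBlocks

/-- The number obtained from `l` by deleting the binary digits in positions `[a, a + r)`. -/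
def eraseBits (a r l : ℕ) : ℕ := l / 2 ^ (a + r) * 2 ^ a + l % 2 ^ a

/-- The most significant binary digit in which `x` and `y` differ exists and has its position in
`[a, a + r)`. -/
def TopDiffBitIn (a r x y : ℕ) : Prop :=
  x / 2 ^ (a + r) = y / 2 ^ (a + r) ∧ x / 2 ^ a ≠ y / 2 ^ a

variable {a r x y : ℕ}

theorem eraseBits_lt {t : ℕ} (ha : a ≤ t) (hx : x < 2 ^ (r + t)) : eraseBits a r x < 2 ^ t := by
  obtain ⟨u, rfl⟩ := Nat.exists_eq_add_of_le' ha
  have high : x / 2 ^ (a + r) < 2 ^ u := by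
    rw [Nat.div_lt_iff_lt_mul (by positivity), ← pow_add]
    convert hx using 2
    ring
  have low : x % 2 ^ a < 2 ^ a := Nat.mod_lt _ (by positivity)
  calc eraseBits a r x < x / 2 ^ (a + r) * 2 ^ a + 2 ^ a := Nat.add_lt_add_left low _
    _ = (x / 2 ^ (a + r) + 1) * 2 ^ a := by ring
    _ ≤ 2 ^ u * 2 ^ a := by gcongr; exact high
    _ = 2 ^ (u + a) := (pow_add 2 u a).symm

theorem eraseBits_lt_eraseBits (hxy : x < y) (h : ¬ TopDiffBitIn a r x y) :
    eraseBits a r x < eraseBits a r y := by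
  have low : x % 2 ^ a < 2 ^ a := Nat.mod_lt _ (by positivity)
  unfold eraseBits
  rcases (Nat.div_le_div_right hxy.le : x / 2 ^ (a + r) ≤ y / 2 ^ (a + r)).lt_or_eq with hlt | heq
  · have := Nat.mul_le_mul_right (2 ^ a) (Nat.succ_le_of_lt hlt)
    rw [Nat.succ_mul] at this
    omega
  · have high : x / 2 ^ a = y / 2 ^ a := by_contra fun hne => h ⟨heq, hne⟩
    have hx := Nat.div_add_mod x (2 ^ a)
    have hy := Nat.div_add_mod y (2 ^ a)
    rw [high] at hx
    rw [heq]
    omega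

theorem TopDiffBitIn.not_of_add_le {b s : ℕ} (h : TopDiffBitIn a r x y) (hab : a + r ≤ b) :
    ¬ TopDiffBitIn b s x y := by
  obtain ⟨u, rfl⟩ := Nat.exists_eq_add_of_le hab
  exact fun h' => h'.2 (by rw [pow_add, ← Nat.div_div_eq_div_mul, h.1, Nat.div_div_eq_div_mul])

end BitBlocks

namespace Formula

variable {ι κ : Type}

/-- Renaming of the variables of a formula. -/
def map (φ : ι → κ) : Formula ι → Formula κ
  | .var i => .var (φ i)
  | .const b => .const b
  | .gate f p q => .gate f (p.map φ) (q.map φ)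

theorem size_map (φ : ι → κ) (F : Formula ι) : (F.map φ).size = F.size := by
  induction F with
  | var | const => rfl
  | gate f p q hp hq => simp only [map, size, hp, hq]

theorem eval_map (φ : ι → κ) (F : Formula ι) (x : κ → Bool) :
    (F.map φ).eval x = F.eval (x ∘ φ) := by
  induction F with
  | var | const => rfl
  | gate f p q hp hq => simp only [map, eval, hp, hq]

/-- The conjunction of a list of formulas. -/
def conj (l : List (Formula ι)) : Formula ι := l.foldr (.gate and) (.const true)

theorem eval_conj {x : ι → Bool} {l : List (Formula ι)} :
    (conj l).eval x = true ↔ ∀ p ∈ l, p.eval x = true := by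
  induction l with
  | nil => simp [conj, eval]
  | cons p l ih => rw [List.forall_mem_cons, ← ih]; exact Bool.and_eq_true_iff

theorem size_conj_le {l : List (Formula ι)} {M : ℕ} (h : ∀ p ∈ l, p.size < M) :
    (conj l).size ≤ l.length * M := by
  induction l with
  | nil => simp [conj, size]
  | cons p l ih =>
    rw [List.forall_mem_cons] at h
    calc (conj (p :: l)).size = p.size + (conj l).size + 1 := rfl
      _ ≤ l.length * M + M := by have := ih h.2; omega
      _ = (p :: l).length * M := by rw [List.length_cons, Nat.succ_mul]

end Formula

namespace Circuit

variable {ι : Type} (C : Circuit ι)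

/-- The nodes of a circuit: its variables, the two constants and its gates. -/
abbrev Node : Type := (ι ⊕ Bool) ⊕ Fin C.size

/-- The node from which a wire starts; the wires are the pairs of a gate and a Boolean which is
`true` for the first input of the gate and `false` for the second. -/
def source (g : Fin C.size) (b : Bool) : C.Node :=
  (bif b then C.in1 g else C.in2 g).map id (Fin.castLE g.isLt.le)

/-- The value carried by a node on input assignment `x`, extending `nodeVal` to all nodes. -/
def value (x : ι → Bool) : C.Node → Bool := Sum.elim (Sum.elim x id) (C.nodeVal x)

/-- The depth of a node, extending `nodeDepth` by `0` on the inputs. -/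
def height : C.Node → ℕ := Sum.elim (fun _ => 0) C.nodeDepth

theorem eval_eq_value_out (x : ι → Bool) : C.eval x = C.value x C.out := by
  unfold eval value
  rcases C.out with (i | b) | g <;> rfl

theorem depth_eq_height_out : C.depth = C.height C.out := by
  unfold depth height
  rcases C.out with i | g <;> rfl

theorem nodeVal_eq_gate (x : ι → Bool) (g : Fin C.size) :
    C.nodeVal x g = C.gate g (C.value x (C.source g true)) (C.value x (C.source g false)) := by
  rw [nodeVal, source, source, cond_true, cond_false]
  congr 1
  · rcases C.in1 g with (i | b) | h <;> rfl
  · rcases C.in2 g with (i | b) | h <;> rfl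

theorem nodeDepth_eq_max (g : Fin C.size) :
    C.nodeDepth g = 1 + max (C.height (C.source g true)) (C.height (C.source g false)) := by
  rw [nodeDepth, source, source, cond_true, cond_false]
  congr 2
  · rcases C.in1 g with i | h <;> rfl
  · rcases C.in2 g with i | h <;> rfl

variable {C}

theorem lt_of_source_eq {g h : Fin C.size} {b : Bool} (hs : C.source g b = .inr h) : h < g := by
  unfold source at hs
  rcases hw : (bif b then C.in1 g else C.in2 g) with i | k <;> rw [hw] at hs
  · cases hs
  · obtain rfl := Sum.inr.inj hs
    exact k.isLt

theorem height_source_lt (g : Fin C.size) (b : Bool) : C.height (C.source g b) < C.nodeDepth g := by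
  rw [nodeDepth_eq_max]
  cases b <;> omega

variable (C) (S : Finset (Fin C.size))

/-- The circuit unrolled into a formula at gate `g`, where a gate in `S` other than the root is
replaced by a guess input. -/
def unroll (g : Fin C.size) : Formula (ι ⊕ S) :=
  let arg (v : (ι ⊕ Bool) ⊕ Fin g.val) : Formula (ι ⊕ S) :=
    match v with
    | .inl (.inl i) => .var (.inl i)
    | .inl (.inr b) => .const b
    | .inr h =>
      if hS : h.castLE g.isLt.le ∈ S then .var (.inr ⟨_, hS⟩) else unroll (h.castLE g.isLt.le)
  .gate (C.gate g) (arg (C.in1 g)) (arg (C.in2 g))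
  termination_by g.val
  decreasing_by exact h.isLt

/-- The formula for the value of a node in terms of the inputs and the guesses for the gates
in `S`. -/
def nodeFormula : C.Node → Formula (ι ⊕ S)
  | .inl (.inl i) => .var (.inl i)
  | .inl (.inr b) => .const b
  | .inr g => if hS : g ∈ S then .var (.inr ⟨g, hS⟩) else C.unroll S g

theorem unroll_eq_gate (g : Fin C.size) :
    C.unroll S g = .gate (C.gate g) (C.nodeFormula S (C.source g true))
      (C.nodeFormula S (C.source g false)) := by
  rw [unroll, source, source, cond_true, cond_false]
  congr 1
  · rcases C.in1 g with (i | b) | h <;> rfl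
  · rcases C.in2 g with (i | b) | h <;> rfl

variable {C S}

theorem eval_nodeFormula {x : ι → Bool} {y : S → Bool} {v : C.Node}
    (hguess : ∀ s : S, v = .inr s.1 → y s = C.nodeVal x s)
    (hunroll : ∀ g, v = .inr g → (C.unroll S g).eval (Sum.elim x y) = C.nodeVal x g) :
    (C.nodeFormula S v).eval (Sum.elim x y) = C.value x v := by
  rcases v with (i | b) | g
  · rfl
  · rfl
  · rw [nodeFormula]
    split_ifs with hS
    · exact hguess ⟨g, hS⟩ rfl
    · exact hunroll g rfl

/-- The hypothesis covers both guesses known to be the true gate values and guesses known to pass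
the check against the unrolled formula. -/
theorem eval_unroll {x : ι → Bool} {y : S → Bool}
    (hy : ∀ s : S, (C.unroll S s).eval (Sum.elim x y) = C.nodeVal x s → y s = C.nodeVal x s)
    (g : Fin C.size) : (C.unroll S g).eval (Sum.elim x y) = C.nodeVal x g := by
  induction g using WellFoundedLT.induction with
  | _ g ih =>
    have hsource (b : Bool) :
        (C.nodeFormula S (C.source g b)).eval (Sum.elim x y) = C.value x (C.source g b) :=
      eval_nodeFormula (fun s hs => hy s (ih s (lt_of_source_eq hs)))
        fun h hs => ih h (lt_of_source_eq hs)
    rw [unroll_eq_gate, nodeVal_eq_gate, Formula.eval, hsource, hsource]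

theorem forall_guess_eq_eval_unroll_iff {x : ι → Bool} {y : S → Bool} :
    (∀ s : S, y s = (C.unroll S s).eval (Sum.elim x y)) ↔ ∀ s : S, y s = C.nodeVal x s := by
  constructor <;> intro hy s
  · exact (hy s).trans (eval_unroll (fun s h => (hy s).trans h) s)
  · exact (hy s).trans (eval_unroll (fun s _ => hy s) s).symm

theorem size_unroll_lt {p : Fin C.size → ℕ} {H : ℕ}
    (hp : ∀ g b h, C.nodeDepth g < H → C.source g b = .inr h → h ∉ S → p h < p g)
    (g : Fin C.size) (hg : C.nodeDepth g < H) : (C.unroll S g).size < 2 ^ (p g + 1) := by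
  induction g using WellFoundedLT.induction with
  | _ g ih =>
    have hsource (b : Bool) : (C.nodeFormula S (C.source g b)).size < 2 ^ p g := by
      have hheight := height_source_lt g b
      rcases hv : C.source g b with (i | c) | h
      · exact Nat.two_pow_pos _
      · exact Nat.two_pow_pos _
      · rw [nodeFormula]
        split_ifs with hS
        · exact Nat.two_pow_pos _
        · rw [hv] at hheight
          exact (ih h (lt_of_source_eq hv) (hheight.trans hg)).trans_le
            (Nat.pow_le_pow_right two_pos (hp g b h hg hv hS))
    rw [unroll_eq_gate, Formula.size, pow_succ]
    have := hsource true
    have := hsource false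
    omega

variable (C S)

/-- The formula asserting that every guess agrees with the formula unrolled at its gate, and that
the output of the circuit is then true. -/
noncomputable def guessFormula : Formula (ι ⊕ S) :=
  .conj (C.nodeFormula S C.out ::
    S.attach.toList.map fun s => .gate (· == ·) (.var (.inr s)) (C.unroll S s))

variable {C S}

theorem eval_guessFormula {x : ι → Bool} {y : S → Bool} :
    (C.guessFormula S).eval (Sum.elim x y) = true ↔
      C.eval x = true ∧ ∀ s : S, y s = C.nodeVal x s := by
  have hchecks : (C.guessFormula S).eval (Sum.elim x y) = true ↔
      (C.nodeFormula S C.out).eval (Sum.elim x y) = true ∧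
        ∀ s : S, y s = (C.unroll S s).eval (Sum.elim x y) := by
    rw [guessFormula, Formula.eval_conj, List.forall_mem_cons, List.forall_mem_map]
    simp [Formula.eval]
  rw [hchecks, forall_guess_eq_eval_unroll_iff, eval_eq_value_out]
  refine and_congr_left fun hy => ?_
  rw [eval_nodeFormula (fun s _ => hy s) fun g _ => eval_unroll (fun s _ => hy s) g]

theorem eval_eq_true_iff_exists_guess {x : ι → Bool} :
    C.eval x = true ↔ ∃ y : S → Bool, (C.guessFormula S).eval (Sum.elim x y) = true := by
  simp only [eval_guessFormula, exists_and_left]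
  exact (and_iff_left ⟨_, fun _ => rfl⟩).symm

theorem size_guessFormula_le {M : ℕ} (hS : ∀ s ∈ S, (C.unroll S s).size < M)
    (hout : (C.nodeFormula S C.out).size < M) :
    (C.guessFormula S).size ≤ (S.card + 1) * (M + 1) := by
  refine (Formula.size_conj_le (M := M + 1) ?_).trans_eq (by simp)
  rw [List.forall_mem_cons, List.forall_mem_map]
  refine ⟨hout.trans M.lt_succ_self, fun s _ => ?_⟩
  have := hS s s.2
  simp only [Formula.size]
  omega

open Classical in
/-- The wires into gates of depth below `H` along which the most significant bit in which the depth
changes has its position in `[a, a + r)`. The restriction to depth below `H` keeps gates deeper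
than the output, whose unrolled formulas may be large, from being guessed. -/
noncomputable def cutWires (C : Circuit ι) (a r H : ℕ) : Finset (Fin C.size × Bool) :=
  {w | C.nodeDepth w.1 < H ∧ TopDiffBitIn a r (C.height (C.source w.1 w.2)) (C.nodeDepth w.1)}

open Classical in
/-- The gates from which the wires in `cutWires` start. -/
noncomputable def cutGates (C : Circuit ι) (a r H : ℕ) : Finset (Fin C.size) :=
  ((C.cutWires a r H).image fun w => C.source w.1 w.2).toRight

variable {a r H : ℕ}

theorem mem_cutWires {w : Fin C.size × Bool} :
    w ∈ C.cutWires a r H ↔ C.nodeDepth w.1 < H ∧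
      TopDiffBitIn a r (C.height (C.source w.1 w.2)) (C.nodeDepth w.1) := by
  simp [cutWires]

theorem mem_cutGates {h : Fin C.size} :
    h ∈ C.cutGates a r H ↔ ∃ w ∈ C.cutWires a r H, C.source w.1 w.2 = .inr h := by
  simp [cutGates]

theorem card_cutGates_le : (C.cutGates a r H).card ≤ (C.cutWires a r H).card := by
  classical
  unfold cutGates
  exact Finset.card_toRight_le.trans Finset.card_image_le

theorem nodeDepth_lt_of_mem_cutGates {h : Fin C.size} (hh : h ∈ C.cutGates a r H) :
    C.nodeDepth h < H := by
  obtain ⟨w, hw, hs⟩ := mem_cutGates.1 hh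
  have hlt := height_source_lt w.1 w.2
  rw [hs] at hlt
  exact hlt.trans (mem_cutWires.1 hw).1

theorem pairwise_disjoint_cutWires :
    Pairwise fun p q => Disjoint (C.cutWires (p * r) r H) (C.cutWires (q * r) r H) := by
  refine (pairwise_disjoint_on _).2 fun p q hpq => Finset.disjoint_left.2 fun w hp hq => ?_
  have hle : p * r + r ≤ q * r := by
    rw [← Nat.succ_mul]
    exact Nat.mul_le_mul_right r hpq
  exact (mem_cutWires.1 hp).2.not_of_add_le hle (mem_cutWires.1 hq).2

theorem exists_mul_card_cutWires_le (C : Circuit ι) {Q : ℕ} (hQ : 0 < Q) :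
    ∃ q < Q, Q * (C.cutWires (q * r) r H).card ≤ 2 * C.size := by
  classical
  have hsum : ∑ q ∈ Finset.range Q, (C.cutWires (q * r) r H).card ≤ 2 * C.size := by
    rw [← Finset.card_biUnion fun p _ q _ hpq => pairwise_disjoint_cutWires hpq]
    exact (Finset.card_le_univ _).trans_eq (by simp [mul_comm])
  obtain ⟨q, hq, hle⟩ : ∃ q ∈ Finset.range Q,
      Q * (C.cutWires (q * r) r H).card ≤ 2 * C.size := by
    refine Finset.exists_le_of_sum_le (Finset.nonempty_range_iff.2 hQ.ne') ?_
    rw [← Finset.mul_sum, Finset.sum_const, Finset.card_range, smul_eq_mul]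
    exact Nat.mul_le_mul_left Q hsum
  exact ⟨q, Finset.mem_range.1 hq, hle⟩

theorem size_unroll_cutGates_lt {t : ℕ} (ha : a ≤ t) {g : Fin C.size}
    (hg : C.nodeDepth g < 2 ^ (r + t)) :
    (C.unroll (C.cutGates a r (2 ^ (r + t))) g).size < 2 ^ 2 ^ t := by
  refine (size_unroll_lt (p := fun g => eraseBits a r (C.nodeDepth g)) ?_ g hg).trans_le
    (Nat.pow_le_pow_right two_pos (eraseBits_lt ha hg))
  intro g b h hg hs hcut
  have hlt := height_source_lt g b
  rw [hs] at hlt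
  refine eraseBits_lt_eraseBits hlt fun htop => hcut (mem_cutGates.2 ⟨(g, b), ?_, hs⟩)
  rw [mem_cutWires, hs]
  exact ⟨hg, htop⟩

theorem size_guessFormula_cutGates_le {t : ℕ} (ha : a ≤ t) (hdepth : C.depth < 2 ^ (r + t)) :
    (C.guessFormula (C.cutGates a r (2 ^ (r + t)))).size ≤
      ((C.cutGates a r (2 ^ (r + t))).card + 1) * (2 ^ 2 ^ t + 1) := by
  refine size_guessFormula_le
    (fun s hs => size_unroll_cutGates_lt ha (nodeDepth_lt_of_mem_cutGates hs)) ?_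
  rw [depth_eq_height_out] at hdepth
  rcases hout : C.out with (i | b) | g
  · exact Nat.two_pow_pos _
  · exact Nat.two_pow_pos _
  · rw [nodeFormula]
    split_ifs with hS
    · exact Nat.two_pow_pos _
    · rw [hout] at hdepth
      exact size_unroll_cutGates_lt ha hdepth

theorem exists_card_cutGates_le (C : Circuit ι) (H t : ℕ) (hr : 0 < r) :
    ∃ a ≤ t, (r + t) * (C.cutGates a r H).card ≤ 4 * r * C.size := by
  obtain ⟨q, hq, hcard⟩ := C.exists_mul_card_cutWires_le (r := r) (H := H) (t / r).succ_pos
  refine ⟨q * r, (Nat.le_div_iff_mul_le hr).1 (Nat.lt_succ_iff.1 hq), ?_⟩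
  have hblocks : r + t ≤ 2 * r * (t / r + 1) := by
    have := Nat.lt_mul_div_succ t hr
    nlinarith
  calc (r + t) * (C.cutGates (q * r) r H).card
      ≤ 2 * r * (t / r + 1) * (C.cutWires (q * r) r H).card :=
        Nat.mul_le_mul hblocks card_cutGates_le
    _ = 2 * r * ((t / r + 1) * (C.cutWires (q * r) r H).card) := by ring
    _ ≤ 2 * r * (2 * C.size) := Nat.mul_le_mul_left _ hcard
    _ = 4 * r * C.size := by ring

theorem exists_nondeterministic_formula (C : Circuit ι) {r t : ℕ} (hr : 0 < r)
    (hdepth : C.depth < 2 ^ (r + t)) :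
    ∃ (m : ℕ) (F : Formula (ι ⊕ Fin m)),
      (r + t) * m ≤ 4 * r * C.size ∧ F.size ≤ (m + 1) * (2 ^ 2 ^ t + 1) ∧
      ∀ x, C.eval x = true ↔ ∃ y, F.eval (Sum.elim x y) = true := by
  obtain ⟨a, ha, hcard⟩ := C.exists_card_cutGates_le (2 ^ (r + t)) t hr
  set S := C.cutGates a r (2 ^ (r + t))
  refine ⟨S.card, (C.guessFormula S).map (Sum.map id S.equivFin), hcard, ?_, fun x => ?_⟩
  · rw [Formula.size_map]
    exact size_guessFormula_cutGates_le ha hdepth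
  · rw [eval_eq_true_iff_exists_guess (S := S)]
    simp only [Formula.eval_map, Sum.elim_comp_map, Function.comp_id]
    exact S.equivFin.injective.surjective_comp_right.exists

end Circuit

theorem exists_two_pow_two_pow_le_rpow {n : ℝ} (hn : 1 ≤ n) {ε : ℝ} (hε : 0 ≤ ε) :
    ∃ t : ℕ, (2 : ℝ) ^ 2 ^ t ≤ 2 * n ^ ε ∧ ε * Real.logb 2 n < 2 ^ (t + 1) := by
  have hlog : 0 ≤ ε * Real.logb 2 n := mul_nonneg hε (Real.logb_nonneg one_lt_two hn)
  obtain ⟨t, hle, hlt⟩ := exists_nat_pow_near (le_max_left 1 (ε * Real.logb 2 n)) one_lt_two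
  refine ⟨t, ?_, (le_max_right _ _).trans_lt hlt⟩
  calc (2 : ℝ) ^ 2 ^ t = 2 ^ ((2 : ℝ) ^ t) := by rw [← Real.rpow_natCast]; push_cast; rfl
    _ ≤ 2 ^ (1 + Real.logb 2 n * ε) := by
      refine Real.rpow_le_rpow_of_exponent_le one_le_two (hle.trans (max_le ?_ ?_)) <;> linarith
    _ = 2 * n ^ ε := by
      rw [Real.rpow_add two_pos, Real.rpow_one, Real.rpow_mul two_pos.le,
        Real.rpow_logb two_pos (by norm_num) (by linarith)]

/-- Depths up to `d log₂ n` are to be written with `r + t` bits, where `t` is about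
`log₂ (ε log₂ n)` and `r` does not depend on `n`. -/
theorem exists_block_length (d : ℝ) {ε : ℝ} (hε : 0 < ε) :
    ∃ r : ℕ, 0 < r ∧ ∀ n : ℝ, 1 < n → ∃ t : ℕ, (2 : ℝ) ^ 2 ^ t ≤ 2 * n ^ ε ∧
      d * Real.logb 2 n < 2 ^ (r + t) ∧ Real.logb 2 (Real.logb 2 n) ≤ (r + t : ℕ) := by
  obtain ⟨s, hs⟩ := pow_unbounded_of_one_lt (max d 1 / ε) (one_lt_two : (1 : ℝ) < 2)
  obtain ⟨hds, h1s⟩ : d ≤ 2 ^ s * ε ∧ 1 ≤ 2 ^ s * ε := max_le_iff.1 ((div_lt_iff₀ hε).1 hs).le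
  refine ⟨s + 1, s.succ_pos, fun n hn => ?_⟩
  have hlog : 0 < Real.logb 2 n := Real.logb_pos one_lt_two hn
  obtain ⟨t, ht, hεlog⟩ := exists_two_pow_two_pow_le_rpow hn.le hε.le
  have hlog_lt {b : ℝ} (hb : b ≤ 2 ^ s * ε) : b * Real.logb 2 n < 2 ^ (s + 1 + t) :=
    calc b * Real.logb 2 n ≤ 2 ^ s * ε * Real.logb 2 n := by gcongr
      _ = 2 ^ s * (ε * Real.logb 2 n) := mul_assoc _ _ _
      _ < 2 ^ s * 2 ^ (t + 1) := by gcongr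
      _ = 2 ^ (s + 1 + t) := by ring
  refine ⟨t, ht, hlog_lt hds, ?_⟩
  rw [Real.logb_le_iff_le_rpow one_lt_two hlog, Real.rpow_natCast]
  linarith [hlog_lt h1s]

theorem circuit_to_nondeterministic_formula_general (c d : ℝ) {ε : ℝ} (hε : 0 < ε) :
    ∃ K : ℝ, ∀ n : ℝ, 2 < n → ∀ (ι : Type) (C : Circuit ι),
      (C.size : ℝ) ≤ c * n → (C.depth : ℝ) ≤ d * Real.logb 2 n →
      ∃ (m : ℕ) (F : Formula (ι ⊕ Fin m)),
        (m : ℝ) ≤ K * n / Real.logb 2 (Real.logb 2 n) ∧ (F.size : ℝ) ≤ K * n ^ (1 + ε) ∧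
        ∀ x, C.eval x = true ↔ ∃ y, F.eval (Sum.elim x y) = true := by
  obtain ⟨r, hr, hblock⟩ := exists_block_length d hε
  refine ⟨max (4 * r * c) (3 * (4 * c + 1)), fun n hn ι C hsize hdepth => ?_⟩
  obtain ⟨t, ht, hlog_lt, hloglog_le⟩ := hblock n (by linarith)
  obtain ⟨m, F, hm, hF, hCF⟩ := C.exists_nondeterministic_formula hr
    (by exact_mod_cast hdepth.trans_lt hlog_lt : C.depth < 2 ^ (r + t))
  refine ⟨m, F, ?_, ?_, hCF⟩
  · have hlog : 1 < Real.logb 2 n := by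
      rwa [Real.lt_logb_iff_rpow_lt one_lt_two (by linarith), Real.rpow_one]
    rw [le_div_iff₀ (Real.logb_pos one_lt_two hlog)]
    calc m * Real.logb 2 (Real.logb 2 n) ≤ m * (r + t : ℕ) := by gcongr
      _ ≤ 4 * r * C.size := by rw [mul_comm]; exact_mod_cast hm
      _ ≤ 4 * r * (c * n) := by gcongr
      _ = 4 * r * c * n := by ring
      _ ≤ _ := by gcongr; exact le_max_left _ _
  · have hm_le : (m : ℝ) ≤ 4 * C.size := by
      have : r * m ≤ r * (4 * C.size) := by nlinarith
      exact_mod_cast Nat.le_of_mul_le_mul_left this hr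
    have hrpow : 1 ≤ n ^ ε := Real.one_le_rpow (by linarith) hε.le
    calc (F.size : ℝ) ≤ (m + 1) * (2 ^ 2 ^ t + 1) := by exact_mod_cast hF
      _ ≤ (4 * c * n + n) * (2 * n ^ ε + n ^ ε) := by gcongr <;> linarith
      _ = 3 * (4 * c + 1) * n ^ (1 + ε) := by
        rw [Real.rpow_add (by linarith), Real.rpow_one]
        ring
      _ ≤ _ := by gcongr; exact le_max_right _ _

/-- for all constants `c, d > 0` and every constant `ε > 0`,
there is a constant `K` such that every `B₂`-circuit with `n ≥ 4` inputs, size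
at most `c·n` and depth at most `d·log₂ n` computing `f` can be converted into
a nondeterministic formula with `n` actual inputs, at most
`K·n / log₂ log₂ n` guess inputs, and size at most `K·n^(1+ε)`, computing `f`. -/
theorem circuit_to_nondeterministic_formula (c d ε : ℝ)
    (hc : 0 < c) (hd : 0 < d) (hε : 0 < ε) :
    ∃ K : ℝ, ∀ (n : ℕ), 4 ≤ n → ∀ (f : (Fin n → Bool) → Bool)
      (C : Circuit (Fin n)),
      (C.size : ℝ) ≤ c * n → (C.depth : ℝ) ≤ d * Real.logb 2 n →
      C.Computes f →
      ∃ (m : ℕ) (F : Formula (Fin n ⊕ Fin m)),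
        (m : ℝ) ≤ K * n / Real.logb 2 (Real.logb 2 n) ∧
        (F.size : ℝ) ≤ K * (n : ℝ) ^ (1 + ε : ℝ) ∧
        ∀ x : Fin n → Bool,
          f x = true ↔ ∃ y : Fin m → Bool, F.eval (Sum.elim x y) = true := by
  obtain ⟨K, hK⟩ := circuit_to_nondeterministic_formula_general c d hε
  refine ⟨K, fun n hn f C hsize hdepth hf => ?_⟩
  obtain rfl : C.eval = f := funext hf
  exact hK n (by exact_mod_cast (by omega : 2 < n)) (Fin n) C hsize hdepth
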